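/- arXiv:2403.00654 — 6 statements merged into one kernel-verified Lean document; each statement's English description precedes it below -/
import Mathlib

section
/- For every subset S of a topological space (X, τ), the δP-closure of S satisfies Pcl_δ(S) = S ∪ cl(int_δ(S)), where cl denotes topological closure. -/
open Set

variable {X : Type*}

/-- The δ-closure of a set `S`: points `x` such that every open set `A` containing `x`
satisfies `S ∩ interior (closure A) ≠ ∅`. -/
def deltaCl [TopologicalSpace X] (S : Set X) : Set X :=
  {x | ∀ A : Set X, IsOpen A → x ∈ A → (S ∩ interior (closure A)).Nonempty}

/-- The δ-interior of `S` is the complement of the δ-closure of the complement. -/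
def deltaInt [TopologicalSpace X] (S : Set X) : Set X := (deltaCl Sᶜ)ᶜ

/-- `S` is δP-open if `S ⊆ int (cl_δ S)`. -/
def DeltaPOpen [TopologicalSpace X] (S : Set X) : Prop := S ⊆ interior (deltaCl S)

/-- `S` is δP-closed if its complement is δP-open. -/
def DeltaPClosed [TopologicalSpace X] (S : Set X) : Prop := DeltaPOpen Sᶜ

/-- The δP-closure / δP-upper approximation of `S`:
the intersection of all δP-closed sets containing `S`. -/
def PclDelta [TopologicalSpace X] (S : Set X) : Set X := ⋂₀ {W | DeltaPClosed W ∧ S ⊆ W}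

/-- The δP-interior / δP-lower approximation of `S`:
the union of all δP-open sets contained in `S`. -/
def PintDelta [TopologicalSpace X] (S : Set X) : Set X := ⋃₀ {V | DeltaPOpen V ∧ V ⊆ S}

/-- `S` is preopen if `S ⊆ int (cl S)`. -/
def PreOpen [TopologicalSpace X] (S : Set X) : Prop := S ⊆ interior (closure S)

/-- `S` is preclosed if its complement is preopen. -/
def PreClosed [TopologicalSpace X] (S : Set X) : Prop := PreOpen Sᶜ

/-- The P-lower approximation of `S`: the union of all preopen sets contained in `S`. -/
def PLower [TopologicalSpace X] (S : Set X) : Set X := ⋃₀ {V | PreOpen V ∧ V ⊆ S}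

/-- The P-upper approximation of `S`: the intersection of all preclosed sets containing `S`. -/
def PUpper [TopologicalSpace X] (S : Set X) : Set X := ⋂₀ {W | PreClosed W ∧ S ⊆ W}

theorem deltaCl_closed_aux [TopologicalSpace X] (T : Set X) : IsClosed (deltaCl T) := by
  rw [← isOpen_compl_iff, isOpen_iff_forall_mem_open]
  intro x hx
  simp only [deltaCl, mem_compl_iff, mem_setOf_eq, not_forall] at hx
  obtain ⟨A, hA, hxA, hn⟩ := hx
  exact ⟨A, fun y hy h => hn (h A hA hy), hA, hxA⟩

theorem deltaCl_mono_aux [TopologicalSpace X] {S T : Set X} (h : S ⊆ T) :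
    deltaCl S ⊆ deltaCl T :=
  fun _ hx A hA hxA => (hx A hA hxA).mono (inter_subset_inter_left _ h)

theorem deltaPOpen_aux [TopologicalSpace X] (T : Set X) :
    DeltaPOpen (T ∩ interior (deltaCl T)) := by
  have key : interior (deltaCl T) ⊆ deltaCl (T ∩ interior (deltaCl T)) := by
    intro x hx A hA hxA
    obtain ⟨t, htT, ht⟩ := interior_subset hx (A ∩ interior (deltaCl T))
      (hA.inter isOpen_interior) ⟨hxA, hx⟩
    refine ⟨t, ⟨htT, ?_⟩, interior_mono (closure_mono inter_subset_left) ht⟩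
    exact interior_mono (closure_minimal (inter_subset_right.trans interior_subset)
      (deltaCl_closed_aux T)) ht
  intro x hx
  exact interior_maximal key isOpen_interior hx.2

theorem pclDelta_eq_union_closure_deltaInt [TopologicalSpace X] (S : Set X) :
    PclDelta S = S ∪ closure (deltaInt S) := by
  have e : closure (deltaInt S) = (interior (deltaCl Sᶜ))ᶜ := by
    rw [deltaInt, closure_compl]
  rw [e]
  apply Subset.antisymm
  · apply sInter_subset_of_mem
    refine ⟨?_, subset_union_left⟩
    have := deltaPOpen_aux Sᶜ
    rw [DeltaPClosed, compl_union, compl_compl]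
    exact this
  · rintro x hx W ⟨hW, hSW⟩
    by_contra hxW
    rcases hx with hx | hx
    · exact hxW (hSW hx)
    · exact hx (interior_mono (deltaCl_mono_aux (compl_subset_compl.2 hSW)) (hW hxW))
end

section
/- For every subset S of a topological space (X, τ), the δP-interior of S satisfies Pint_δ(S) = S ∩ int(cl_δ(S)), where int denotes topological interior. -/
open Set

variable {X : Type*}

theorem isClosed_deltaCl_aux [TopologicalSpace X] (S : Set X) : IsClosed (deltaCl S) := by
  refine isClosed_of_closure_subset fun x hx A hA hxA => ?_
  obtain ⟨y, hyA, hy⟩ := mem_closure_iff.1 hx A hA hxA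
  exact hy A hA hyA

theorem pintDelta_eq_inter_interior_deltaCl [TopologicalSpace X] (S : Set X) :
    PintDelta S = S ∩ interior (deltaCl S) := by
  apply Subset.antisymm
  · rintro x ⟨V, ⟨hV, hVS⟩, hx⟩
    refine ⟨hVS hx, interior_mono ?_ (hV hx)⟩
    intro y hy A hA hyA
    exact (hy A hA hyA).mono (inter_subset_inter_left _ hVS)
  · intro x hx
    refine ⟨S ∩ interior (deltaCl S), ⟨?_, inter_subset_left⟩, hx⟩
    refine inter_subset_right.trans (interior_maximal ?_ isOpen_interior)
    intro y hy A hA hyA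
    obtain ⟨z, hzS, hz⟩ := interior_subset hy (A ∩ interior (deltaCl S))
      (hA.inter isOpen_interior) ⟨hyA, hy⟩
    refine ⟨z, ⟨hzS, ?_⟩, interior_mono (closure_mono inter_subset_left) hz⟩
    refine interior_mono ?_ hz
    exact closure_minimal (inter_subset_right.trans interior_subset) (isClosed_deltaCl_aux S)
end

section
/- For every subset S of a topological space (X, τ), Pcl_δ(Pint_δ(S)) = Pint_δ(S) ∪ cl(int_δ(S)), where cl denotes topological closure. -/
open Set

variable {X : Type*}

theorem mem_deltaInt_iff [TopologicalSpace X] (S : Set X) (x : X) :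
    x ∈ deltaInt S ↔ ∃ A : Set X, IsOpen A ∧ x ∈ A ∧ interior (closure A) ⊆ S := by
  unfold deltaInt deltaCl
  simp only [mem_compl_iff, mem_setOf_eq, not_forall, exists_prop, Set.not_nonempty_iff_eq_empty]
  refine exists_congr fun A => and_congr_right fun _ => and_congr_right fun _ => ?_
  rw [← Set.disjoint_iff_inter_eq_empty, Set.disjoint_compl_left_iff_subset]

theorem sub_int_cl [TopologicalSpace X] {A : Set X} (h : IsOpen A) :
    A ⊆ interior (closure A) := interior_maximal subset_closure h

theorem deltaInt_sub [TopologicalSpace X] (S : Set X) : deltaInt S ⊆ S := by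
  intro x hx
  obtain ⟨A, hA, hxA, h⟩ := (mem_deltaInt_iff S x).1 hx
  exact h (sub_int_cl hA hxA)

theorem deltaInt_mono' [TopologicalSpace X] {S T : Set X} (h : S ⊆ T) :
    deltaInt S ⊆ deltaInt T := by
  intro x hx
  obtain ⟨A, hA, hxA, h'⟩ := (mem_deltaInt_iff S x).1 hx
  exact (mem_deltaInt_iff T x).2 ⟨A, hA, hxA, h'.trans h⟩

theorem intcl_sub_deltaInt [TopologicalSpace X] {S A : Set X}
    (h : interior (closure A) ⊆ S) : interior (closure A) ⊆ deltaInt S := by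
  intro y hy
  refine (mem_deltaInt_iff S y).2 ⟨_, isOpen_interior, hy, ?_⟩
  exact (interior_mono (closure_minimal interior_subset isClosed_closure)).trans h

theorem deltaInt_idem [TopologicalSpace X] (S : Set X) :
    deltaInt S ⊆ deltaInt (deltaInt S) := by
  intro x hx
  obtain ⟨A, hA, hxA, h⟩ := (mem_deltaInt_iff S x).1 hx
  exact (mem_deltaInt_iff _ x).2 ⟨A, hA, hxA, intcl_sub_deltaInt h⟩

theorem isOpen_deltaInt [TopologicalSpace X] (S : Set X) : IsOpen (deltaInt S) := by
  rw [isOpen_iff_forall_mem_open]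
  intro x hx
  obtain ⟨A, hA, hxA, h⟩ := (mem_deltaInt_iff S x).1 hx
  exact ⟨A, (sub_int_cl hA).trans (intcl_sub_deltaInt h), hA, hxA⟩

theorem deltaPOpen_of_isOpen [TopologicalSpace X] {U : Set X} (h : IsOpen U) :
    DeltaPOpen U :=
  interior_maximal (fun x hx _ hA hxA => ⟨x, hx, sub_int_cl hA hxA⟩) h

theorem deltaPClosed_iff [TopologicalSpace X] (W : Set X) :
    DeltaPClosed W ↔ closure (deltaInt W) ⊆ W := by
  unfold DeltaPClosed DeltaPOpen deltaInt
  rw [closure_compl, Set.compl_subset_comm]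

theorem deltaInt_union_closure [TopologicalSpace X] (T : Set X) :
    deltaInt (T ∪ closure (deltaInt T)) ⊆ closure (deltaInt T) := by
  intro x hx
  by_contra hn
  obtain ⟨A, hA, hxA, h⟩ := (mem_deltaInt_iff _ x).1 hx
  apply hn
  apply subset_closure
  refine (mem_deltaInt_iff T x).2 ⟨A ∩ (closure (deltaInt T))ᶜ,
    hA.inter isClosed_closure.isOpen_compl, ⟨hxA, hn⟩, ?_⟩
  intro y hy
  have h1 : y ∈ interior (closure A) := interior_mono (closure_mono inter_subset_left) hy
  have h2 := interior_mono (closure_mono inter_subset_right) hy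
  rw [closure_compl, interior_compl] at h2
  rcases h h1 with h3 | h3
  · exact h3
  · exact absurd (closure_mono (sub_int_cl (isOpen_deltaInt T)) h3) h2

theorem pclDelta_pintDelta [TopologicalSpace X] (S : Set X) :
    PclDelta (PintDelta S) = PintDelta S ∪ closure (deltaInt S) := by
  have hsub : PintDelta S ⊆ S := sUnion_subset fun V hV => hV.2
  have hD : deltaInt S ⊆ PintDelta S :=
    subset_sUnion_of_mem (show deltaInt S ∈ {V | DeltaPOpen V ∧ V ⊆ S} from
      ⟨deltaPOpen_of_isOpen (isOpen_deltaInt S), deltaInt_sub S⟩)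
  have hE : deltaInt (PintDelta S) = deltaInt S :=
    (deltaInt_mono' hsub).antisymm ((deltaInt_idem S).trans (deltaInt_mono' hD))
  rw [← hE]
  apply Subset.antisymm
  · refine sInter_subset_of_mem ⟨(deltaPClosed_iff _).2 ?_, subset_union_left⟩
    exact (closure_minimal (deltaInt_union_closure _) isClosed_closure).trans subset_union_right
  · refine subset_sInter fun W hW => union_subset hW.2 ?_
    exact (closure_mono (deltaInt_mono' hW.2)).trans ((deltaPClosed_iff W).1 hW.1)
end

section
/- For every subset S of a topological space (X, τ), the chain of inclusions int(S) ⊆ L_P(S) ⊆ L_δP(S) ⊆ S ⊆ U_δP(S) ⊆ U_P(S) ⊆ cl(S) holds, where int and cl are topological interior and closure. -/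
open Set

variable {X : Type*}

theorem isOpen_preOpen_aux [TopologicalSpace X] {U : Set X} (hU : IsOpen U) : PreOpen U :=
  interior_maximal subset_closure hU

theorem preOpen_deltaPOpen_aux [TopologicalSpace X] {V : Set X} (h : PreOpen V) :
    DeltaPOpen V := by
  refine h.trans (interior_mono ?_)
  intro x hx A hA hxA
  obtain ⟨y, hyA, hyV⟩ := mem_closure_iff.1 hx A hA hxA
  exact ⟨y, hyV, interior_maximal subset_closure hA hyA⟩

theorem approx_chain [TopologicalSpace X] (S : Set X) :
    interior S ⊆ PLower S ∧ PLower S ⊆ PintDelta S ∧ PintDelta S ⊆ S ∧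
      S ⊆ PclDelta S ∧ PclDelta S ⊆ PUpper S ∧ PUpper S ⊆ closure S := by
  refine ⟨?_, ?_, ?_, ?_, ?_, ?_⟩
  · exact subset_sUnion_of_mem ⟨isOpen_preOpen_aux isOpen_interior, interior_subset⟩
  · exact sUnion_subset_sUnion fun V hV => ⟨preOpen_deltaPOpen_aux hV.1, hV.2⟩
  · exact sUnion_subset fun V hV => hV.2
  · exact subset_sInter fun W hW => hW.2
  · exact sInter_subset_sInter fun W hW => ⟨preOpen_deltaPOpen_aux hW.1, hW.2⟩
  · exact sInter_subset_of_mem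
      ⟨isOpen_preOpen_aux isClosed_closure.isOpen_compl, subset_closure⟩
end

section
/- If a subset S of a topological space (X, τ) is P-exact, i.e. L_P(S) = U_P(S), then S is δP-exact, i.e. L_δP(S) = U_δP(S). Equivalently, every δP-rough set (one with L_δP(S) ≠ U_δP(S)) is P-rough (has L_P(S) ≠ U_P(S)). -/
open Set

variable {X : Type*}

theorem PreOpen.deltaPOpen_aux [TopologicalSpace X] {S : Set X} (h : PreOpen S) :
    DeltaPOpen S := by
  refine h.trans (interior_mono ?_)
  intro x hx A hA hxA
  obtain ⟨y, hyA, hyS⟩ := mem_closure_iff.1 hx A hA hxA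
  exact ⟨y, hyS, interior_maximal subset_closure hA hyA⟩

theorem p_exact_deltaP_exact [TopologicalSpace X] (S : Set X) :
    (PLower S = PUpper S → PintDelta S = PclDelta S) ∧
      (PintDelta S ≠ PclDelta S → PLower S ≠ PUpper S) := by
  have key : PLower S = PUpper S → PintDelta S = PclDelta S := by
    intro h
    apply Subset.antisymm
    · rintro x ⟨V, ⟨_, hVS⟩, hx⟩ W ⟨_, hSW⟩
      exact hSW (hVS hx)
    · intro x hx
      have hU : x ∈ PUpper S := fun W hW => hx W ⟨PreOpen.deltaPOpen_aux hW.1, hW.2⟩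
      rw [← h] at hU
      obtain ⟨V, ⟨hV, hVS⟩, hxV⟩ := hU
      exact ⟨V, ⟨hV.deltaPOpen_aux, hVS⟩, hxV⟩
  exact ⟨key, fun h h' => h (key h')⟩
end

section
/- Let (X, τ) be a topological space in which every δP-open subset of X is δP-closed. Then for all c, d ∈ X, either U_δP({c}) = U_δP({d}) or U_δP({c}) ∩ U_δP({d}) = ∅; hence the family of sets {U_δP({c}) : c ∈ X} forms a partition of X. -/
open Set

variable {X : Type*}

theorem deltaP_upper_singleton_partition [TopologicalSpace X]
    (h : ∀ S : Set X, DeltaPOpen S → DeltaPClosed S) :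
    (∀ c d : X, PclDelta ({c} : Set X) = PclDelta ({d} : Set X) ∨
        PclDelta ({c} : Set X) ∩ PclDelta ({d} : Set X) = ∅) ∧
      Setoid.IsPartition {T : Set X | ∃ c : X, T = PclDelta ({c} : Set X)} := by 
  have refl : ∀ x : X, x ∈ PclDelta ({x} : Set X) := fun x W hW => hW.2 rfl
  have sub : ∀ x y : X, y ∈ PclDelta ({x} : Set X) →
      PclDelta ({y} : Set X) ⊆ PclDelta ({x} : Set X) := by
    intro x y hy z hz W hW
    exact hz W ⟨hW.1, Set.singleton_subset_iff.2 (hy W hW)⟩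
  have symm : ∀ x y : X, y ∈ PclDelta ({x} : Set X) → x ∈ PclDelta ({y} : Set X) := by
    intro x y hy W hW
    by_contra hx
    exact hy Wᶜ ⟨h _ hW.1, Set.singleton_subset_iff.2 hx⟩ (hW.2 rfl)
  have key : ∀ x y : X, y ∈ PclDelta ({x} : Set X) →
      PclDelta ({x} : Set X) = PclDelta ({y} : Set X) := fun x y hy =>
    Set.Subset.antisymm (sub y x (symm x y hy)) (sub x y hy)
  refine ⟨fun c d => ?_, ?_, fun a => ⟨PclDelta {a}, ⟨⟨a, rfl⟩, refl a⟩, ?_⟩⟩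
  · by_cases hne : (PclDelta ({c} : Set X) ∩ PclDelta ({d} : Set X)).Nonempty
    · obtain ⟨z, hc, hd⟩ := hne
      exact Or.inl ((key c z hc).trans (key d z hd).symm)
    · exact Or.inr (Set.not_nonempty_iff_eq_empty.1 hne)
  · rintro ⟨c, hc⟩
    have := refl c
    rw [← hc] at this
    exact this
  · rintro T ⟨⟨c, rfl⟩, ha⟩
    exact key c a ha
end
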